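/- Let n, k, ℓ be positive integers with ℓ ≤ k. Suppose Π : {0,1}^{n×k} → ℝ is a finite linear combination Π = Σ_j a_j χ_j of ℓ-cylinder intersections with real coefficients a_j, such that |Π(X)| ≤ 1 and |F_{n,k}(X) − Π(X)| ≤ 1/3 for every X ∈ {0,1}^{n×k}. Then Σ_j |a_j| ≥ (1/6)·exp(n/4^ℓ). -/

import Mathlib

open Finset

/-- `χ` is an `S`-cylinder intersection on `{0,1}^{n×k}`: a product over `j ∈ S` of
`{0,1}`-valued functions `φ j`, where `φ j` does not depend on the `j`-th column. -/
def IsCylinderOn (n k : ℕ) (S : Finset (Fin k))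
    (χ : (Fin n → Fin k → Bool) → ℝ) : Prop :=
  ∃ φ : Fin k → ((Fin n → Fin k → Bool) → ℝ),
    (∀ j ∈ S, ∀ X, φ j X = 0 ∨ φ j X = 1) ∧
    (∀ j ∈ S, ∀ X Y, (∀ i, ∀ j', j' ≠ j → X i j' = Y i j') → φ j X = φ j Y) ∧
    (∀ X, χ X = ∏ j ∈ S, φ j X)

/-- The XOR `X_{i,1} ⊕ ⋯ ⊕ X_{i,k}` of the entries of row `i`, as `0` or `1`. -/
def rowXor {k : ℕ} (u : Fin k → Bool) : ℕ :=
  (Finset.univ.filter (fun j => u j = true)).card % 2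

/-- `F_{n,k}(X) = MOD₃(⊕_j X_{1,j}, …, ⊕_j X_{n,j})`: true iff
`Σ_i (X_{i,1} ⊕ ⋯ ⊕ X_{i,k}) ≡ 0 (mod 3)`. -/
def Fmod (n k : ℕ) (X : Fin n → Fin k → Bool) : Bool :=
  decide ((∑ i, rowXor (X i)) % 3 = 0)


noncomputable section

/-- Sign of a bit. -/
def sgn (b : Bool) : ℂ := if b then -1 else 1

/-- Sign of a row. -/
def rsg {k : ℕ} (u : Fin k → Bool) : ℂ := ∏ j, sgn (u j)

/-- The row function, a primitive cube root of unity to the power the sign of the row. -/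
def rw3 {k : ℕ} (u : Fin k → Bool) : ℂ := -1/2 + rsg u * ((Real.sqrt 3 / 2 : ℝ) * Complex.I)

/-- Product of row functions over the alive rows. -/
def fA {n k : ℕ} (A : Fin n → Bool) (X : Fin n → Fin k → Bool) : ℂ :=
  ∏ i, if A i then rw3 (X i) else 1

/-- Shift of one column. -/
def shf {n k : ℕ} (j : Fin k) (h : Fin n → Bool) (X : Fin n → Fin k → Bool) :
    Fin n → Fin k → Bool := fun i j' => if j' = j then xor (X i j') (h i) else X i j'

lemma shf_shf {n k : ℕ} (j : Fin k) (h h' : Fin n → Bool) (X : Fin n → Fin k → Bool) :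
    shf j h (shf j h' X) = shf j (fun i => xor (h i) (h' i)) X := by
  funext i j'
  unfold shf
  by_cases hj : j' = j
  · simp only [hj, if_true]
    cases X i j <;> cases h i <;> cases h' i <;> rfl
  · simp [hj]

lemma shf_self {n k : ℕ} (j : Fin k) (h : Fin n → Bool) (X : Fin n → Fin k → Bool) :
    shf j h (shf j h X) = X := by
  rw [shf_shf]
  funext i j'
  simp [shf]

lemma sum_shf {n k : ℕ} (j : Fin k) (h : Fin n → Bool) (f : (Fin n → Fin k → Bool) → ℂ) :
    ∑ X, f (shf j h X) = ∑ X, f X :=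
  Equiv.sum_comp (⟨shf j h, shf j h, shf_self j h, shf_self j h⟩ : Equiv.Perm _) f

lemma sum_xor {n : ℕ} (h' : Fin n → Bool) (f : (Fin n → Bool) → ℂ) :
    ∑ h : Fin n → Bool, f (fun i => xor (h i) (h' i)) = ∑ h, f h :=
  Equiv.sum_comp (⟨fun h i => xor (h i) (h' i), fun h i => xor (h i) (h' i),
    fun h => by funext i; simp, fun h => by funext i; simp⟩ : Equiv.Perm _) f

lemma cs_step {n k : ℕ} (j : Fin k) (φ g : (Fin n → Fin k → Bool) → ℂ)
    (hφ : ∀ X, ‖φ X‖ ≤ 1) (hind : ∀ h X, φ (shf j h X) = φ X) :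
    ‖∑ X, g X * φ X‖ ^ 2 * (2 : ℝ) ^ n ≤
      (Fintype.card (Fin n → Fin k → Bool) : ℝ) *
        ‖∑ h : Fin n → Bool, ∑ X, g (shf j h X) * (starRingEnd ℂ) (g X)‖ := by
  set G : (Fin n → Fin k → Bool) → ℂ := fun X => ∑ h : Fin n → Bool, g (shf j h X) with hG
  have hM : (Fintype.card (Fin n → Bool) : ℝ) = 2 ^ n := by simp
  have h1 : (2 : ℂ) ^ n * ∑ X, g X * φ X = ∑ X, G X * φ X := by
    have : ∑ X, G X * φ X = ∑ h : Fin n → Bool, ∑ X, g X * φ X := by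
      simp only [hG, sum_mul]
      rw [sum_comm]
      refine sum_congr rfl fun h _ => ?_
      rw [← sum_shf j h (fun X => g X * φ X)]
      simp only [hind]
    rw [this]
    simp
  have h2 : ((∑ X, ‖G X‖ ^ 2 : ℝ) : ℂ) =
      2 ^ n * ∑ h : Fin n → Bool, ∑ X, g (shf j h X) * (starRingEnd ℂ) (g X) := by
    have e1 : ((∑ X, ‖G X‖ ^ 2 : ℝ) : ℂ) = ∑ h' : Fin n → Bool, ∑ X, ∑ h : Fin n → Bool,
        g (shf j h X) * (starRingEnd ℂ) (g (shf j h' X)) := by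
      rw [sum_comm]
      push_cast
      refine sum_congr rfl fun X _ => ?_
      rw [← Complex.mul_conj', hG]
      simp only [map_sum, mul_sum, sum_mul]
    rw [e1]
    have e2 : ∀ h' : Fin n → Bool, (∑ X, ∑ h : Fin n → Bool,
        g (shf j h X) * (starRingEnd ℂ) (g (shf j h' X))) =
        ∑ h : Fin n → Bool, ∑ X, g (shf j h X) * (starRingEnd ℂ) (g X) := by
      intro h'
      rw [← sum_shf j h', sum_comm]
      simp only [shf_self, shf_shf]
      exact sum_xor h' (fun h => ∑ X, g (shf j h X) * (starRingEnd ℂ) (g X))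
    simp only [e2]
    simp
  have h3 : (∑ X, ‖G X‖ ^ 2 : ℝ) =
      2 ^ n * ‖∑ h : Fin n → Bool, ∑ X, g (shf j h X) * (starRingEnd ℂ) (g X)‖ := by
    have := congrArg norm h2
    rw [norm_mul, Complex.norm_real, Real.norm_of_nonneg (by positivity)] at this
    rw [this]; simp
  have h4 : (2 : ℝ) ^ n * ‖∑ X, g X * φ X‖ ≤ ∑ X, ‖G X‖ := by
    have := congrArg norm h1
    rw [norm_mul] at this
    simp only [norm_pow, Complex.norm_ofNat] at this
    rw [this]
    refine (norm_sum_le _ _).trans (sum_le_sum fun X _ => ?_)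
    rw [norm_mul]
    exact mul_le_of_le_one_right (norm_nonneg _) (hφ X)
  have h5 : (∑ X, ‖G X‖) ^ 2 ≤
      (Fintype.card (Fin n → Fin k → Bool) : ℝ) * ∑ X, ‖G X‖ ^ 2 := by
    have := sq_sum_le_card_mul_sum_sq (s := (univ : Finset (Fin n → Fin k → Bool)))
      (f := fun X => ‖G X‖)
    simpa using this
  have h6 : ((2 : ℝ) ^ n * ‖∑ X, g X * φ X‖) ^ 2 ≤ (∑ X, ‖G X‖) ^ 2 := by
    gcongr
  rw [h3] at h5
  have h7 := h6.trans h5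
  have hp : (0 : ℝ) < 2 ^ n := by positivity
  refine le_of_mul_le_mul_left ?_ hp
  nlinarith [h7]

lemma sgn_sq (b : Bool) : sgn b * sgn b = 1 := by cases b <;> simp [sgn]

lemma rsg_cases {k : ℕ} (u : Fin k → Bool) : rsg u = 1 ∨ rsg u = -1 := by
  have : rsg u * rsg u = 1 := by
    unfold rsg
    rw [← prod_mul_distrib]
    simp [sgn_sq]
  exact mul_self_eq_one_iff.mp this

lemma rsg_shf {n k : ℕ} (j : Fin k) (h : Fin n → Bool) (X : Fin n → Fin k → Bool) (i : Fin n) :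
    rsg (shf j h X i) = sgn (h i) * rsg (X i) := by
  unfold rsg shf
  rw [← mul_prod_erase univ _ (mem_univ j), ← mul_prod_erase univ (fun j => sgn (X i j)) (mem_univ j),
    ← mul_assoc]
  congr 1
  · cases h i <;> cases X i j <;> simp [sgn]
  · refine prod_congr rfl fun j' hj' => ?_
    simp [ne_of_mem_erase hj']

lemma s3 : ((Real.sqrt 3 : ℝ) : ℂ) ^ 2 = 3 := by
  rw [← Complex.ofReal_pow, Real.sq_sqrt (by norm_num)]; norm_num

lemma rw3_shf {n k : ℕ} (j : Fin k) (h : Fin n → Bool) (X : Fin n → Fin k → Bool) (i : Fin n) :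
    rw3 (shf j h X i) * (starRingEnd ℂ) (rw3 (X i)) = if h i then rw3 (X i) else 1 := by
  unfold rw3
  rw [rsg_shf]
  have hI := Complex.I_sq
  have h3 := s3
  rcases rsg_cases (X i) with hs | hs <;> rw [hs] <;> cases h i <;>
    simp [sgn, map_ofNat] <;> first
      | linear_combination (-1/4 : ℂ) * Complex.I ^ 2 * h3 - (3/4 : ℂ) * hI
      | linear_combination (1/4 : ℂ) * Complex.I ^ 2 * h3 + (3/4 : ℂ) * hI

lemma fA_shf {n k : ℕ} (j : Fin k) (A h : Fin n → Bool) (X : Fin n → Fin k → Bool) :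
    fA A (shf j h X) * (starRingEnd ℂ) (fA A X) = fA (fun i => A i && h i) X := by
  unfold fA
  rw [map_prod, ← prod_mul_distrib]
  refine prod_congr rfl fun i _ => ?_
  cases hA : A i
  · simp [hA]
  · simp [hA, rw3_shf]

lemma sum_rsg {k : ℕ} (hk : 0 < k) : ∑ u : Fin k → Bool, rsg u = 0 := by
  unfold rsg
  rw [← Fintype.prod_sum (fun (_ : Fin k) b => sgn b)]
  simp [sgn, hk.ne']

lemma sum_rw3 {k : ℕ} (hk : 0 < k) : ∑ u : Fin k → Bool, rw3 u = 2 ^ k * (-1/2) := by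
  unfold rw3
  rw [sum_add_distrib, ← sum_mul, sum_rsg hk]
  simp

lemma sum_fA {n k : ℕ} (hk : 0 < k) (A : Fin n → Bool) :
    ∑ X : Fin n → Fin k → Bool, fA A X =
      (Fintype.card (Fin n → Fin k → Bool) : ℂ) * ∏ i, if A i then (-1/2 : ℂ) else 1 := by
  unfold fA
  rw [← Fintype.prod_sum (fun i (u : Fin k → Bool) => if A i then rw3 u else 1)]
  have : (Fintype.card (Fin n → Fin k → Bool) : ℂ) = ∏ i : Fin n, (2 : ℂ) ^ k := by simp
  rw [this, ← prod_mul_distrib]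
  refine prod_congr rfl fun i _ => ?_
  cases A i
  · simp
  · simp [sum_rw3 hk]

lemma sum_and {R : Type*} [Field R] [CharZero R] {n : ℕ} (A : Fin n → Bool) (c : R) :
    ∑ h : Fin n → Bool, ∏ i, (if (A i && h i) then c else 1) =
      2 ^ n * ∏ i, if A i then (1 + c) / 2 else 1 := by
  rw [← Fintype.prod_sum (fun i (b : Bool) => if (A i && b) then c else 1)]
  have : (2 : R) ^ n = ∏ i : Fin n, (2 : R) := by simp
  rw [this, ← prod_mul_distrib]
  refine prod_congr rfl fun i _ => ?_
  cases A i
  · simp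
    try norm_num
  · simp
    try ring

lemma comb {Q N P M Sg R : ℝ} (K : ℕ) (hQ : 0 ≤ Q) (hN : 0 ≤ N) (hM : 0 < M) (hS : 0 ≤ Sg)
    (c2 : Q ^ 2 * M ≤ N * Sg) (hpow : Sg ^ K * M ≤ M ^ K * R) (hsum : R ≤ N ^ K * (M * P)) :
    (Q ^ 2) ^ K ≤ (N ^ 2) ^ K * P := by
  have c3 : (Q ^ 2 * M) ^ K ≤ (N * Sg) ^ K := by gcongr
  rw [mul_pow, mul_pow] at c3
  have hfin : (Q ^ 2) ^ K * (M ^ K * M) ≤ ((N ^ 2) ^ K * P) * (M ^ K * M) := by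
    calc (Q ^ 2) ^ K * (M ^ K * M) = (Q ^ 2) ^ K * M ^ K * M := by ring
      _ ≤ (N ^ K * Sg ^ K) * M := by gcongr
      _ = N ^ K * (Sg ^ K * M) := by ring
      _ ≤ N ^ K * (M ^ K * (N ^ K * (M * P))) := by
        refine mul_le_mul_of_nonneg_left (hpow.trans ?_) (by positivity)
        exact mul_le_mul_of_nonneg_left hsum (by positivity)
      _ = _ := by ring
  exact le_of_mul_le_mul_right hfin (by positivity)

lemma main_bound {n k : ℕ} (hk : 0 < k) (S : Finset (Fin k)) (hS : S.Nonempty) :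
    ∀ (A : Fin n → Bool) (φ : Fin k → (Fin n → Fin k → Bool) → ℂ),
      (∀ j ∈ S, ∀ X, ‖φ j X‖ ≤ 1) → (∀ j ∈ S, ∀ h X, φ j (shf j h X) = φ j X) →
      ‖∑ X, fA A X * ∏ j ∈ S, φ j X‖ ^ (2 ^ S.card) ≤
        (Fintype.card (Fin n → Fin k → Bool) : ℝ) ^ (2 ^ S.card) *
          ∏ i, if A i then (1 - (3/2) / 2 ^ S.card : ℝ) else 1 := by
  induction hS using Finset.Nonempty.cons_induction with
  | singleton j =>
    intro A φ h1 h2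
    have := cs_step j (φ j) (fA A) (h1 j (by simp)) (h2 j (by simp))
    simp only [fA_shf, sum_fA hk] at this
    rw [← mul_sum, sum_and A (-1/2 : ℂ)] at this
    have e : ‖∏ i, (if A i then (1 + (-1/2 : ℂ)) / 2 else 1)‖ =
        ∏ i, if A i then (1 - (3/2) / 2 ^ 1 : ℝ) else 1 := by
      rw [norm_prod]
      refine prod_congr rfl fun i _ => ?_
      cases A i
      · simp
      · norm_num
    rw [norm_mul, norm_mul, e] at this
    simp only [norm_pow, Complex.norm_ofNat, Complex.norm_natCast] at this
    simp only [prod_singleton, card_singleton, pow_one] at this ⊢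
    have hp : (0 : ℝ) < 2 ^ n := by positivity
    refine le_of_mul_le_mul_right (this.trans (le_of_eq ?_)) hp
    ring
  | cons j S hj hS ih =>
    intro A φ h1 h2
    have hsj : ∀ j' ∈ S, j' ≠ j := fun j' hj' e => hj (e ▸ hj')
    set N : ℝ := (Fintype.card (Fin n → Fin k → Bool) : ℝ) with hN
    have hN0 : 0 < N := by simp only [hN]; positivity
    have hp : (0 : ℝ) < 2 ^ n := by positivity
    have c := cs_step j (φ j) (fun X => fA A X * ∏ j ∈ S, φ j X) (h1 j (by simp)) (h2 j (by simp))
    set φ' : (Fin n → Bool) → Fin k → (Fin n → Fin k → Bool) → ℂ :=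
      fun h j' X => φ j' (shf j h X) * (starRingEnd ℂ) (φ j' X) with hφ'
    set T : (Fin n → Bool) → ℂ :=
      fun h => ∑ X, fA (fun i => A i && h i) X * ∏ j' ∈ S, φ' h j' X with hT
    have eT : ∀ h : Fin n → Bool, (∑ X, (fA A (shf j h X) * ∏ j' ∈ S, φ j' (shf j h X)) *
        (starRingEnd ℂ) (fA A X * ∏ j' ∈ S, φ j' X)) = T h := by
      intro h
      simp only [hT, hφ']
      refine sum_congr rfl fun X _ => ?_
      rw [← fA_shf j, prod_mul_distrib, map_mul, map_prod]
      ring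
    simp only [eT] at c
    have ih' : ∀ h, ‖T h‖ ^ (2 ^ S.card) ≤ N ^ (2 ^ S.card) *
          ∏ i, if (A i && h i) then (1 - (3/2) / 2 ^ S.card : ℝ) else 1 := by
      intro h
      refine ih (fun i => A i && h i) (φ' h) ?_ ?_
      · intro j' hj' X
        simp only [hφ', norm_mul, RCLike.norm_conj]
        exact mul_le_one₀ (h1 j' (by simp [hj']) _) (norm_nonneg _) (h1 j' (by simp [hj']) _)
      · intro j' hj' h' X
        have : shf j h (shf j' h' X) = shf j' h' (shf j h X) := by
          have := hsj j' hj'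
          funext i t
          unfold shf
          by_cases ht : t = j
          · have : t ≠ j' := by rw [ht]; exact this.symm
            simp [ht, ht ▸ this]
          · simp [ht]
        simp only [hφ', this, h2 j' (by simp [hj'])]
    have hsum : ∑ h, ‖T h‖ ^ (2 ^ S.card) ≤ N ^ (2 ^ S.card) *
        (2 ^ n * ∏ i, if A i then (1 - (3/2) / 2 ^ (S.card + 1) : ℝ) else 1) := by
      refine (sum_le_sum fun h _ => ih' h).trans (le_of_eq ?_)
      rw [← mul_sum, sum_and A (1 - (3/2) / 2 ^ S.card : ℝ)]
      congr 3
      funext i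
      congr 1
      field_simp
      ring
    have hpow : (∑ h, ‖T h‖) ^ (2 ^ S.card) * 2 ^ n ≤
        (2 ^ n) ^ (2 ^ S.card) * ∑ h, ‖T h‖ ^ (2 ^ S.card) := by
      obtain ⟨m, hm⟩ : ∃ m, 2 ^ S.card = m + 1 := ⟨2 ^ S.card - 1, by
        have : 0 < 2 ^ S.card := by positivity
        omega⟩
      
      have := pow_sum_div_card_le_sum_pow (s := (univ : Finset (Fin n → Bool)))
        (f := fun h => ‖T h‖) (fun _ _ => norm_nonneg _) m
      rw [hm]
      have hc : ((univ : Finset (Fin n → Bool)).card : ℝ) = 2 ^ n := by simp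
      rw [hc, div_le_iff₀ (by positivity)] at this
      calc _ ≤ ((∑ h, ‖T h‖ ^ (m + 1)) * (2 ^ n) ^ m) * 2 ^ n := by gcongr
        _ = _ := by ring
    have hQ : ‖∑ X, fA A X * ∏ j' ∈ cons j S hj, φ j' X‖ =
        ‖∑ X, (fA A X * ∏ j' ∈ S, φ j' X) * φ j X‖ := by
      congr 1
      refine sum_congr rfl fun X _ => ?_
      rw [prod_cons]; ring
    rw [hQ, card_cons, pow_succ 2 S.card, mul_comm (2 ^ S.card) 2, pow_mul, pow_mul]
    set Q := ‖∑ X, (fA A X * ∏ j' ∈ S, φ j' X) * φ j X‖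
    have c2 : Q ^ 2 * 2 ^ n ≤ N * ∑ h, ‖T h‖ :=
      c.trans (by gcongr; exact norm_sum_le _ _)
    have hQ0 : 0 ≤ Q := norm_nonneg _
    have hS0 : 0 ≤ ∑ h, ‖T h‖ := sum_nonneg fun _ _ => norm_nonneg _
    clear_value Q N T
    exact comb (2 ^ S.card) hQ0 hN0.le hp hS0 c2 hpow hsum

/-- The cube root of unity. -/
def om : ℂ := -1/2 + ((Real.sqrt 3 / 2 : ℝ) * Complex.I)

lemma om_sq : om ^ 2 = -1/2 - ((Real.sqrt 3 / 2 : ℝ) * Complex.I) := by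
  unfold om
  push_cast
  linear_combination (1/4 : ℂ) * Complex.I ^ 2 * s3 + (3/4 : ℂ) * Complex.I_sq

lemma om_cube : om ^ 3 = 1 := by
  rw [pow_succ, om_sq]
  unfold om
  push_cast
  linear_combination (-1/4 : ℂ) * Complex.I ^ 2 * s3 - (3/4 : ℂ) * Complex.I_sq

lemma om_norm : ‖om‖ = 1 := by
  have : ‖om‖ ^ 3 = 1 := by rw [← norm_pow, om_cube]; simp
  exact (pow_eq_one_iff_of_nonneg (norm_nonneg _) (by norm_num)).mp this

lemma om_re (m : ℕ) : (om ^ m).re = if m % 3 = 0 then 1 else -1/2 := by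
  have h : om ^ m = om ^ (m % 3) := by
    conv_lhs => rw [← Nat.div_add_mod m 3, pow_add, pow_mul, om_cube, one_pow, one_mul]
  rw [h]
  have : m % 3 < 3 := Nat.mod_lt _ (by norm_num)
  interval_cases m % 3
  · simp
  · simp [om]
  · rw [om_sq]; simp

lemma rsg_rowXor {k : ℕ} (u : Fin k → Bool) : rsg u = (-1) ^ rowXor u := by
  unfold rsg sgn rowXor
  rw [prod_ite, prod_const_one, mul_one, prod_const]
  exact neg_one_pow_eq_pow_mod_two _

lemma rw3_om {k : ℕ} (u : Fin k → Bool) : rw3 u = om ^ (1 + rowXor u) := by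
  unfold rw3
  rw [rsg_rowXor]
  have : rowXor u < 2 := Nat.mod_lt _ (by norm_num)
  interval_cases rowXor u
  · simp [om]
  · rw [om_sq]; ring

lemma fA_om {n k : ℕ} (X : Fin n → Fin k → Bool) :
    om ^ (2 * n) * fA (fun _ => true) X = om ^ (∑ i, rowXor (X i)) := by
  unfold fA
  simp only [if_true, rw3_om, prod_pow_eq_pow_sum, sum_add_distrib, sum_const, card_univ,
    Fintype.card_fin, smul_eq_mul, mul_one]
  rw [← pow_add, ← add_assoc, pow_add, show 2 * n + n = 3 * n by ring, pow_mul om 3, om_cube]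
  simp

lemma re_fA {n k : ℕ} (X : Fin n → Fin k → Bool) :
    (om ^ (2 * n) * fA (fun _ => true) X).re = if Fmod n k X then 1 else -1/2 := by
  rw [fA_om, om_re]
  simp [Fmod]

lemma corr {n k ℓ : ℕ} (hℓ : 0 < ℓ) (hℓk : ℓ ≤ k) (χ : (Fin n → Fin k → Bool) → ℝ)
    (S : Finset (Fin k)) (hS : S.card ≤ ℓ) (hχ : IsCylinderOn n k S χ) :
    ‖∑ X, fA (fun _ => true) X * (χ X : ℂ)‖ ≤
      (Fintype.card (Fin n → Fin k → Bool) : ℝ) *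
        Real.exp (-(3/2) * ((n : ℝ) / 4 ^ ℓ)) := by
  obtain ⟨φ, h01, hind, hprod⟩ := hχ
  obtain ⟨S', hSS', -, hcard⟩ := exists_subsuperset_card_eq (subset_univ S) hS
    (by simpa using hℓk)
  have hne : S'.Nonempty := card_pos.mp (by omega)
  have key := main_bound (n := n) (hℓ.trans_le hℓk) S' hne (fun _ => true)
    (fun j X => if j ∈ S then (φ j X : ℂ) else 1) ?_ ?_
  · have e : ∀ X, ∏ j ∈ S', (if j ∈ S then (φ j X : ℂ) else 1) = (χ X : ℂ) := by
      intro X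
      rw [hprod X, prod_ite_mem, inter_eq_right.mpr hSS']
      push_cast
      rfl
    simp only [e, hcard, if_true, prod_const, card_univ, Fintype.card_fin] at key
    refine le_of_pow_le_pow_left₀ (n := 2 ^ ℓ) (by positivity) (by positivity) (key.trans ?_)
    rw [mul_pow]
    gcongr
    rw [← Real.exp_nat_mul]
    have h2 : (2 : ℝ) ≤ 2 ^ ℓ := by
      calc (2 : ℝ) = 2 ^ 1 := by norm_num
        _ ≤ 2 ^ ℓ := pow_le_pow_right₀ (by norm_num) hℓ
    have hb : (0 : ℝ) ≤ 1 - (3/2) / 2 ^ ℓ := by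
      rw [sub_nonneg, div_le_one (by positivity)]; linarith
    calc (1 - (3/2) / 2 ^ ℓ : ℝ) ^ n ≤ (Real.exp (-((3/2) / 2 ^ ℓ))) ^ n := by
          gcongr
          have := Real.add_one_le_exp (-((3/2 : ℝ) / 2 ^ ℓ))
          linarith
      _ = _ := by
          rw [← Real.exp_nat_mul]
          congr 1
          have : (4 : ℝ) ^ ℓ = 2 ^ ℓ * 2 ^ ℓ := by rw [← mul_pow]; norm_num
          rw [this]
          push_cast
          field_simp
  · intro j _ X
    by_cases hj : j ∈ S
    · rcases h01 j hj X with h | h <;> simp [hj, h]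
    · simp [hj]
  · intro j _ h X
    by_cases hj : j ∈ S
    · simp only [hj, if_true]
      rw [hind j hj (shf j h X) X]
      intro i j' hj'
      simp [shf, hj']
    · simp [hj]

lemma cyl_abs {n k : ℕ} (χ : (Fin n → Fin k → Bool) → ℝ)
    (S : Finset (Fin k)) (hχ : IsCylinderOn n k S χ) (X) : |χ X| ≤ 1 := by
  obtain ⟨φ, h01, hind, hprod⟩ := hχ
  rw [hprod, abs_prod]
  refine prod_le_one (fun _ _ => abs_nonneg _) fun j hj => ?_
  rcases h01 j hj X with h | h <;> simp [h]

end

/-- If `Π = Σ_j a_j χ_j` is a linear combination of `ℓ`-cylinder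
intersections with `|Π| ≤ 1` and `|F_{n,k} − Π| ≤ 1/3` everywhere, then
`Σ_j |a_j| ≥ (1/6)·exp(n/4^ℓ)`. -/
theorem stmt_16 (n k ℓ : ℕ) (hn : 0 < n) (hℓ : 0 < ℓ) (hℓk : ℓ ≤ k)
    {ι : Type*} (J : Finset ι) (a : ι → ℝ) (χ : ι → ((Fin n → Fin k → Bool) → ℝ))
    (hcyl : ∀ j ∈ J, ∃ S : Finset (Fin k), S.card ≤ ℓ ∧ IsCylinderOn n k S (χ j))
    (hbnd : ∀ X, |∑ j ∈ J, a j * χ j X| ≤ 1)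
    (happ : ∀ X, |(if Fmod n k X then (1 : ℝ) else 0) - ∑ j ∈ J, a j * χ j X| ≤ 1 / 3) :
    (1 / 6 : ℝ) * Real.exp ((n : ℝ) / 4 ^ ℓ) ≤ ∑ j ∈ J, |a j| := by
  set t : ℝ := (n : ℝ) / 4 ^ ℓ with ht
  set N : ℝ := (Fintype.card (Fin n → Fin k → Bool) : ℝ) with hN
  have hN0 : 0 < N := by simp only [hN]; positivity
  by_cases h4 : Real.exp t ≤ 4
  · have hz : Fmod n k (fun _ _ => false) = true := by simp [Fmod, rowXor]
    have h := happ (fun _ _ => false)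
    rw [hz] at h
    simp only [if_true] at h
    have h1 := (abs_le.mp h).2
    have h2 : ∑ j ∈ J, a j * χ j (fun _ _ => false) ≤ ∑ j ∈ J, |a j| := by
      refine sum_le_sum fun j hj => (le_abs_self _).trans ?_
      obtain ⟨S, -, hS⟩ := hcyl j hj
      rw [abs_mul]
      exact mul_le_of_le_one_right (abs_nonneg _) (cyl_abs _ S hS _)
    linarith
  · push Not at h4
    have hn5 : 5 ≤ n := by
      by_contra hlt
      have hn4 : (n : ℝ) ≤ 4 := by
        have : n ≤ 4 := by omega
        exact_mod_cast this
      have h4l : (4 : ℝ) ≤ 4 ^ ℓ := by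
        calc (4 : ℝ) = 4 ^ 1 := by norm_num
          _ ≤ 4 ^ ℓ := pow_le_pow_right₀ (by norm_num) hℓ
      have : t ≤ 1 := by
        rw [ht, div_le_one (by positivity)]; linarith
      have := Real.exp_le_exp.mpr this
      have := Real.exp_one_lt_d9
      linarith
    set Pi : (Fin n → Fin k → Bool) → ℝ := fun X => ∑ j ∈ J, a j * χ j X with hPi
    set G : (Fin n → Fin k → Bool) → ℝ :=
      fun X => (om ^ (2 * n) * fA (fun _ => true) X).re with hG
    have hpt : ∀ X, 1/9 + (5/9) * G X ≤ Pi X * G X := by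
      intro X
      have h := abs_le.mp (happ X)
      change -(1/3) ≤ _ - Pi X ∧ _ - Pi X ≤ 1/3 at h
      simp only [hG, re_fA]
      cases hF : Fmod n k X <;> simp [hF] at h ⊢ <;> linarith [h.1, h.2]
    have hlow : N / 9 + (5/9) * ∑ X, G X ≤ ∑ X, Pi X * G X := by
      have := sum_le_sum (s := univ) fun X _ => hpt X
      rw [sum_add_distrib, ← mul_sum, sum_const, card_univ, nsmul_eq_mul] at this
      linarith
    have hGsum : |∑ X, G X| ≤ N * (1/32) := by
      have e : ∑ X, G X = (om ^ (2 * n) * ∑ X : Fin n → Fin k → Bool, fA (fun _ => true) X).re := by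
        rw [mul_sum, Complex.re_sum]
      rw [e]
      refine (Complex.abs_re_le_norm _).trans ?_
      rw [norm_mul, norm_pow, om_norm, one_pow, one_mul, sum_fA (hℓ.trans_le hℓk)]
      simp only [if_true, prod_const, card_univ, Fintype.card_fin]
      rw [norm_mul, Complex.norm_natCast, norm_pow]
      gcongr
      have : ‖(-1/2 : ℂ)‖ = 1/2 := by simp
      rw [this]
      calc (1/2 : ℝ) ^ n ≤ (1/2) ^ 5 := pow_le_pow_of_le_one (by norm_num) (by norm_num) hn5
        _ = _ := by norm_num
    have hup : ∑ X, Pi X * G X ≤ (∑ j ∈ J, |a j|) * (N * Real.exp (-(3/2) * t)) := by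
      have e : ∑ X, Pi X * G X = ∑ j ∈ J, a j *
          (om ^ (2 * n) * ∑ X, fA (fun _ => true) X * (χ j X : ℂ)).re := by
        simp only [hPi, sum_mul]
        rw [sum_comm]
        refine sum_congr rfl fun j _ => ?_
        rw [mul_sum, Complex.re_sum, mul_sum]
        refine sum_congr rfl fun X _ => ?_
        rw [← mul_assoc (om ^ (2 * n)), Complex.re_mul_ofReal]
        ring
      rw [e, sum_mul]
      refine sum_le_sum fun j hj => (le_abs_self _).trans ?_
      obtain ⟨S, hSc, hS⟩ := hcyl j hj
      rw [abs_mul]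
      gcongr
      refine (Complex.abs_re_le_norm _).trans ?_
      rw [norm_mul, norm_pow, om_norm, one_pow, one_mul]
      exact corr hℓ hℓk _ S hSc hS
    set A := ∑ j ∈ J, |a j| with hA
    have h12 : N * (1/12) ≤ N * (A * Real.exp (-(3/2) * t)) := by
      have := (abs_le.mp hGsum).1
      linarith
    have h13 := le_of_mul_le_mul_left h12 hN0
    have e1 : Real.exp (-(3/2) * t) * (Real.exp t * Real.exp (t/2)) = 1 := by
      rw [← Real.exp_add, ← Real.exp_add, ← Real.exp_zero]
      congr 1; ring
    have e2 : Real.exp t = Real.exp (t/2) * Real.exp (t/2) := by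
      rw [← Real.exp_add]; congr 1; ring
    have e3 : 2 ≤ Real.exp (t/2) := by
      have := Real.exp_pos (t/2)
      nlinarith
    have hpos := Real.exp_pos t
    calc (1/6) * Real.exp t ≤ (1/12) * (Real.exp t * Real.exp (t/2)) := by nlinarith
      _ ≤ (A * Real.exp (-(3/2) * t)) * (Real.exp t * Real.exp (t/2)) := by gcongr
      _ = A := by rw [mul_assoc, e1, mul_one]
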